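/- With the notation of the iterated integrals Ω at φ = π/4, one has Ω_{3,1,1} = (iπ/2)·(log 2)² − iπ³/12. -/

import Mathlib

noncomputable section

/-- `p₁ = e^{iπ/4}` -/
def p₁ : ℂ := Complex.exp (Complex.I * ((Real.pi : ℂ) / 4))
/-- `p₂ = -e^{-iπ/4}` -/
def p₂ : ℂ := -Complex.exp (-(Complex.I * ((Real.pi : ℂ) / 4)))
/-- `p₃ = -p₁` -/
def p₃ : ℂ := -p₁
/-- `p₄ = -p₂` -/
def p₄ : ℂ := -p₂

def F₁ (z : ℂ) : ℂ := 1 / (z - p₁) - 1 / (z - p₂) + 1 / (z - p₃) - 1 / (z - p₄)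

def F₂ (z : ℂ) : ℂ := 1 / (z - p₁) - 1 / (z - p₂) - 1 / (z - p₃) + 1 / (z - p₄)

def F₃ (z : ℂ) : ℂ := 1 / (z - p₁) + 1 / (z - p₂) - 1 / (z - p₃) - 1 / (z - p₄)

/-- Iterated integral along `[0, z]`:
`Omega [F_{i₁}, …, F_{iₙ}] z = Ω_{i₁,…,iₙ}(z)`, defined recursively by
`Ω_{i₁,…,i_k}(z) = ∫₀ᶻ Ω_{i₁,…,i_{k-1}}(t) · F_{i_k}(t) dt`, with `Ω_∅ ≡ 1`. -/
def Omega (fs : List (ℂ → ℂ)) : ℝ → ℂ :=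
  fs.foldl (fun g f => fun z => ∫ t in (0:ℝ)..z, g t * f (t : ℂ)) (fun _ => 1)

/-! With `2i` factored out, the forms `F₁ dt` and `F₃ dt` become `dβ` for `β = arctan t²` and `dθ`
for `θ = arctan (√2 t + 1) + arctan (√2 t - 1)`. A word ending in two equal letters collapses to a
single integral, so `Ω_{3,1,1} = -4i ∫₀¹ (π/4 - β)² dθ`. Since `cos θ = √2 sin (π/4 - β)` and `θ`
runs from `0` to `π/2`, this is `-4i ∫₀^{π/2} arcsin² (cos θ / √2) dθ`. Expanding `arcsin²` in
powers, with Wallis integrals `W` as coefficients, and using `(n + 1) W n W (n + 1) = π/2` turns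
`∫₀^{π/2} arcsin² (r cos θ) dθ` into `π/4 · Li₂ (r²)`; finally `Li₂ (1/2)` comes from Euler's
reflection formula. -/

section IteratedIntegrals

open intervalIntegral
open scoped Nat

theorem Omega_concat (fs : List (ℂ → ℂ)) (f : ℂ → ℂ) (z : ℝ) :
    Omega (fs ++ [f]) z = ∫ t in (0 : ℝ)..z, Omega fs t * f t := by
  simp [Omega]

theorem hasDerivAt_Omega_concat {fs : List (ℂ → ℂ)} {f : ℂ → ℂ} (hfs : Continuous (Omega fs))
    (hf : Continuous fun t : ℝ ↦ f t) (z : ℝ) :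
    HasDerivAt (Omega (fs ++ [f])) (Omega fs z * f z) z := by
  rw [funext (Omega_concat fs f)]
  exact ((hfs.mul hf).integral_hasStrictDerivAt 0 z).hasDerivAt

theorem continuous_Omega {fs : List (ℂ → ℂ)} (hfs : ∀ f ∈ fs, Continuous fun t : ℝ ↦ f t) :
    Continuous (Omega fs) := by
  induction fs using List.reverseRecOn with
  | nil => exact continuous_const
  | append_singleton fs f ih =>
    simp only [List.mem_append, List.mem_singleton] at hfs
    have hderiv := hasDerivAt_Omega_concat (ih fun g hg ↦ hfs g (.inl hg)) (hfs f (.inr rfl))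
    exact continuous_iff_continuousAt.mpr fun z ↦ (hderiv z).continuousAt

variable {f g : ℂ → ℂ} {G : ℝ → ℂ}

theorem integral_Omega_concat_mul_pow {fs : List (ℂ → ℂ)} (hfs : Continuous (Omega fs))
    (hf : Continuous fun t : ℝ ↦ f t) (hg : Continuous fun t : ℝ ↦ g t)
    (hG : ∀ t : ℝ, HasDerivAt G (g t) t) (k : ℕ) (z : ℝ) :
    ∫ t in (0 : ℝ)..z, Omega (fs ++ [f]) t * (g t * ((G z - G t) ^ k / k !)) =
      ∫ t in (0 : ℝ)..z, Omega fs t * (f t * ((G z - G t) ^ (k + 1) / (k + 1)!)) := by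
  have hGcont : Continuous G := continuous_iff_continuousAt.mpr fun t ↦ (hG t).continuousAt
  have hpow (t : ℝ) : HasDerivAt (fun t ↦ -((G z - G t) ^ (k + 1) / (k + 1)!))
      (g t * ((G z - G t) ^ k / k !)) t := by
    convert! (((hG t).const_sub (G z)).pow (k + 1)).div_const ((k + 1)! : ℂ) |>.neg using 1
    rw [Nat.factorial_succ]
    push_cast
    field_simp
  rw [integral_mul_deriv_eq_deriv_mul (fun t _ ↦ hasDerivAt_Omega_concat hfs hf t)
    (fun t _ ↦ hpow t) ((hfs.mul hf).intervalIntegrable _ _)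
    ((hg.mul (((continuous_const.sub hGcont).pow k).div_const _)).intervalIntegrable _ _)]
  simp [Omega_concat, mul_assoc]

theorem Omega_cons_replicate (hf : Continuous fun t : ℝ ↦ f t) (hg : Continuous fun t : ℝ ↦ g t)
    (hG : ∀ t : ℝ, HasDerivAt G (g t) t) (n : ℕ) (z : ℝ) :
    Omega (f :: List.replicate n g) z = ∫ t in (0 : ℝ)..z, f t * ((G z - G t) ^ n / n !) := by
  have hcont (m : ℕ) : Continuous (Omega (f :: List.replicate m g)) := by
    refine continuous_Omega fun h hh ↦ ?_
    rcases List.mem_cons.mp hh with rfl | hh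
    · exact hf
    · rwa [List.eq_of_mem_replicate hh]
  have hshift (m k : ℕ) :
      ∫ t in (0 : ℝ)..z, Omega (f :: List.replicate m g) t * (g t * ((G z - G t) ^ k / k !)) =
        ∫ t in (0 : ℝ)..z, f t * ((G z - G t) ^ (m + k + 1) / (m + k + 1)!) := by
    induction m generalizing k with
    | zero =>
      simpa [Omega] using
        integral_Omega_concat_mul_pow (fs := []) continuous_const hf hg hG k z
    | succ m ih =>
      rw [List.replicate_succ', ← List.cons_append,
        integral_Omega_concat_mul_pow (hcont m) hg hg hG, ih, ← add_assoc, add_right_comm m 1 k]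
  cases n with
  | zero => simp [Omega]
  | succ n =>
    rw [List.replicate_succ', ← List.cons_append, Omega_concat]
    simpa using hshift n 0

end IteratedIntegrals

section Dilogarithm

open Real Set

/-- The dilogarithm `Li₂ x = ∑ xᵏ / k²` on `[-1, 1]`, with the summation index shifted to start at
zero; outside `[-1, 1]` the series diverges and the value is junk. -/
def dilog (x : ℝ) : ℝ := ∑' n : ℕ, x ^ (n + 1) / ((n : ℝ) + 1) ^ 2

theorem dilog_zero : dilog 0 = 0 := by simp [dilog]

theorem hasSum_one_div_succ_sq : HasSum (fun n : ℕ ↦ 1 / ((n : ℝ) + 1) ^ 2) (π ^ 2 / 6) := by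
  simpa using (hasSum_nat_add_iff' 1).mpr hasSum_zeta_two

theorem dilog_one : dilog 1 = π ^ 2 / 6 := by
  simpa only [dilog, one_pow] using hasSum_one_div_succ_sq.tsum_eq

theorem norm_pow_div_succ_sq_le {x : ℝ} (hx : |x| ≤ 1) (n : ℕ) :
    ‖x ^ (n + 1) / ((n : ℝ) + 1) ^ 2‖ ≤ 1 / ((n : ℝ) + 1) ^ 2 := by
  rw [norm_div, norm_pow, norm_of_nonneg (by positivity : (0 : ℝ) ≤ ((n : ℝ) + 1) ^ 2)]
  gcongr
  exact pow_le_one₀ (norm_nonneg x) hx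

theorem continuousOn_dilog : ContinuousOn dilog (Icc (-1) 1) :=
  continuousOn_tsum (fun n ↦ by fun_prop) hasSum_one_div_succ_sq.summable
    fun n _ hx ↦ norm_pow_div_succ_sq_le (abs_le.mpr hx) n

theorem hasDerivAt_dilog {x : ℝ} (hx : |x| < 1) (hx₀ : x ≠ 0) :
    HasDerivAt dilog (-log (1 - x) / x) x := by
  obtain ⟨r, hxr, hr⟩ := exists_between hx
  have hmem : x ∈ Ioo (-r) r := abs_lt.mp hxr
  have hterm (n : ℕ) (y : ℝ) (_ : y ∈ Ioo (-r) r) :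
      HasDerivAt (fun y : ℝ ↦ y ^ (n + 1) / ((n : ℝ) + 1) ^ 2) (y ^ n / ((n : ℝ) + 1)) y := by
    convert! (hasDerivAt_pow (n + 1) y).div_const (((n : ℝ) + 1) ^ 2) using 1
    push_cast
    field_simp
  have hbound (n : ℕ) (y : ℝ) (hy : y ∈ Ioo (-r) r) : ‖y ^ n / ((n : ℝ) + 1)‖ ≤ r ^ n := by
    rw [norm_div, norm_pow, norm_of_nonneg (by positivity : (0 : ℝ) ≤ n + 1)]
    exact (div_le_self (by positivity) (by simp)).trans
      (pow_le_pow_left₀ (norm_nonneg y) (abs_lt.mpr hy).le n)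
  have hsummable : Summable fun n : ℕ ↦ x ^ (n + 1) / ((n : ℝ) + 1) ^ 2 :=
    hasSum_one_div_succ_sq.summable.of_norm_bounded (norm_pow_div_succ_sq_le hx.le)
  have hlog : HasSum (fun n : ℕ ↦ x ^ n / ((n : ℝ) + 1)) (-log (1 - x) / x) := by
    convert! (hasSum_pow_div_log_of_abs_lt_one hx).div_const x using 2 with n
    rw [pow_succ]
    field_simp
  rw [← hlog.tsum_eq]
  exact hasDerivAt_tsum_of_isPreconnected
    (summable_geometric_of_lt_one ((abs_nonneg x).trans hxr.le) hr) isOpen_Ioo isPreconnected_Ioo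
    hterm hbound hmem hsummable hmem

theorem continuousAt_log_mul_log_one_sub_zero :
    ContinuousAt (fun x ↦ log x * log (1 - x)) 0 := by
  have hdiff : DifferentiableAt ℝ (fun x ↦ log (1 - x)) 0 :=
    DifferentiableAt.log (by fun_prop) (by norm_num)
  have hfactor : (fun x ↦ log x * log (1 - x)) =
      fun x ↦ x * log x * dslope (fun x ↦ log (1 - x)) 0 x := by
    funext x
    have := sub_smul_dslope (fun x ↦ log (1 - x)) 0 x
    simp only [sub_zero, log_one, smul_eq_mul] at this
    rw [← this]
    ring
  rw [hfactor]
  exact continuous_mul_log.continuousAt.mul (continuousAt_dslope_same.mpr hdiff)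

theorem continuous_log_mul_log_one_sub : Continuous fun x ↦ log x * log (1 - x) := by
  refine continuous_iff_continuousAt.mpr fun x ↦ ?_
  rcases eq_or_ne x 0 with rfl | hx₀
  · exact continuousAt_log_mul_log_one_sub_zero
  rcases eq_or_ne x 1 with rfl | hx₁
  · have hreflect : ContinuousAt (fun x : ℝ ↦ 1 - x) 1 := by fun_prop
    simpa [Function.comp_def, mul_comm] using
      ContinuousAt.comp_of_eq continuousAt_log_mul_log_one_sub_zero hreflect (sub_self 1)
  · have : 1 - x ≠ 0 := sub_ne_zero.mpr hx₁.symm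
    fun_prop (disch := assumption)

theorem dilog_add_dilog_one_sub {x : ℝ} (hx : x ∈ Ioo 0 1) :
    dilog x + dilog (1 - x) = π ^ 2 / 6 - log x * log (1 - x) := by
  let S (y : ℝ) : ℝ := dilog y + dilog (1 - y) + log y * log (1 - y)
  have hcont : ContinuousOn S (Icc 0 x) := by
    refine ((continuousOn_dilog.mono ?_).add (continuousOn_dilog.comp (by fun_prop) ?_)).add
      continuous_log_mul_log_one_sub.continuousOn
    · exact Icc_subset_Icc (by norm_num) hx.2.le
    · exact fun y hy ↦ ⟨by linarith [hy.2, hx.2], by linarith [hy.1]⟩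
  have hderiv : ∀ y ∈ Ioo 0 x, HasDerivAt S 0 y := fun y hy ↦ by
    have hy₀ : 0 < y := hy.1
    have hy₁ : 0 < 1 - y := by linarith [hy.2, hx.2]
    have hsub : HasDerivAt (fun y : ℝ ↦ 1 - y) (-1) y := (hasDerivAt_id y).const_sub 1
    have hleft := hasDerivAt_dilog (abs_lt.mpr ⟨by linarith, by linarith⟩) hy₀.ne'
    have hright := (hasDerivAt_dilog (x := 1 - y) (abs_lt.mpr ⟨by linarith, by linarith⟩)
      hy₁.ne').comp y hsub
    convert! (hleft.add hright).add ((hasDerivAt_log hy₀.ne').mul (hsub.log hy₁.ne')) using 1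
    rw [sub_sub_cancel]
    field_simp
    ring
  obtain ⟨-, -, hslope⟩ := exists_hasDerivAt_eq_slope S (fun _ ↦ 0) hx.1 hcont hderiv
  have hconst : S x = S 0 := by
    simpa [sub_eq_zero, hx.1.ne'] using hslope.symm
  have hS₀ : S 0 = π ^ 2 / 6 := by simp [S, dilog_zero, dilog_one]
  linarith

theorem dilog_one_half : dilog (1 / 2) = π ^ 2 / 12 - log 2 ^ 2 / 2 := by
  have h := dilog_add_dilog_one_sub (x := 1 / 2) (by norm_num)
  rw [show (1 : ℝ) - 1 / 2 = 1 / 2 by norm_num, one_div, log_inv] at h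
  rw [one_div]
  linarith

end Dilogarithm

section ArcsinSquared

open Real Set intervalIntegral

theorem hasSum_intervalIntegral_of_norm_le {ι E : Type*} [Countable ι] [NormedAddCommGroup E]
    [NormedSpace ℝ E] {a b : ℝ} {F : ι → ℝ → E} {f : ℝ → E} {u : ι → ℝ}
    (hF : ∀ i, Continuous (F i)) (hu : Summable u) (hFu : ∀ i, ∀ t ∈ uIoc a b, ‖F i t‖ ≤ u i)
    (hf : ∀ t ∈ uIoc a b, HasSum (F · t) (f t)) :
    HasSum (fun i ↦ ∫ t in a..b, F i t) (∫ t in a..b, f t) :=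
  hasSum_integral_of_dominated_convergence (fun i _ ↦ u i)
    (fun i ↦ (hF i).aestronglyMeasurable) (fun i ↦ .of_forall (hFu i))
    (.of_forall fun _ _ ↦ hu) intervalIntegrable_const (.of_forall hf)

theorem hasSum_odd_pow_of_norm_lt_one {K : Type*} [NormedField K] {x : K} (hx : ‖x‖ < 1) :
    HasSum (fun n : ℕ ↦ x ^ (2 * n + 1)) (x / (1 - x ^ 2)) := by
  have hsq : ‖x ^ 2‖ < 1 := by
    rw [norm_pow]
    exact pow_lt_one₀ (norm_nonneg x) hx two_ne_zero
  simpa only [pow_succ', pow_mul, div_eq_mul_inv] using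
    (hasSum_geometric_of_norm_lt_one hsq).mul_left x

theorem summable_norm_pow_odd {K : Type*} [NormedField K] {x : K} (hx : ‖x‖ < 1) :
    Summable fun n : ℕ ↦ ‖x‖ ^ (2 * n + 1) :=
  (hasSum_odd_pow_of_norm_lt_one (by rwa [norm_norm])).summable

/-- The Wallis integral `∫₀^{π/2} cosⁿ`. -/
def wallisIntegral (n : ℕ) : ℝ := ∫ x in (0 : ℝ)..(π / 2), cos x ^ n

theorem wallisIntegral_add_two (n : ℕ) :
    wallisIntegral (n + 2) = ((n : ℝ) + 1) / (n + 2) * wallisIntegral n := by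
  simp [wallisIntegral, integral_cos_pow]

theorem succ_mul_wallisIntegral_mul_wallisIntegral_succ (n : ℕ) :
    ((n : ℝ) + 1) * (wallisIntegral n * wallisIntegral (n + 1)) = π / 2 := by
  induction n with
  | zero => simp [wallisIntegral]
  | succ n ih =>
    rw [wallisIntegral_add_two, ← ih]
    push_cast
    field_simp
    ring

theorem norm_wallisIntegral_le (n : ℕ) : ‖wallisIntegral n‖ ≤ π / 2 := by
  have hcos : ∀ x ∈ uIoc 0 (π / 2), ‖cos x ^ n‖ ≤ 1 := fun x _ ↦ by
    rw [norm_pow]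
    exact pow_le_one₀ (norm_nonneg _) (abs_cos_le_one x)
  simpa [wallisIntegral, abs_of_pos pi_div_two_pos, abs_of_pos pi_pos] using
    norm_integral_le_of_norm_le_const hcos

theorem norm_mul_cos_le (x θ : ℝ) : ‖x * cos θ‖ ≤ ‖x‖ := by
  rw [norm_mul]
  exact mul_le_of_le_one_right (norm_nonneg x) (abs_cos_le_one θ)

theorem integral_mul_cos_div_one_sub_sq {x : ℝ} (hx : |x| < 1) :
    ∫ φ in (0 : ℝ)..(π / 2), x * cos φ / (1 - (x * cos φ) ^ 2) = arcsin x / √(1 - x ^ 2) := by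
  have hpos : 0 < 1 - x ^ 2 := sub_pos.mpr ((sq_lt_one_iff_abs_lt_one x).mpr hx)
  have hden (φ : ℝ) : 1 - (x * cos φ) ^ 2 ≠ 0 :=
    (sub_pos.mpr ((sq_lt_one_iff_abs_lt_one _).mpr ((norm_mul_cos_le x φ).trans_lt hx))).ne'
  set s := √(1 - x ^ 2) with hs
  have hs₀ : 0 < s := sqrt_pos.mpr hpos
  have hs_sq : s ^ 2 = 1 - x ^ 2 := sq_sqrt hpos.le
  have hderiv (φ : ℝ) : HasDerivAt (fun φ ↦ arctan (x * sin φ / s) / s)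
      (x * cos φ / (1 - (x * cos φ) ^ 2)) φ := by
    convert! ((((hasDerivAt_sin φ).const_mul x).div_const s).arctan).div_const s using 1
    have hden_eq : 1 - (x * cos φ) ^ 2 = s ^ 2 + (x * sin φ) ^ 2 := by
      rw [hs_sq, mul_pow, mul_pow, sin_sq]
      ring
    rw [hden_eq]
    field_simp
  rw [integral_eq_sub_of_hasDerivAt (fun φ _ ↦ hderiv φ)
    (Continuous.intervalIntegrable (.div (by fun_prop) (by fun_prop) hden) _ _),
    arcsin_eq_arctan (abs_lt.mp hx)]
  simp [hs]

theorem hasSum_arcsin_div_sqrt_one_sub_sq {x : ℝ} (hx : |x| < 1) :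
    HasSum (fun n : ℕ ↦ wallisIntegral (2 * n + 1) * x ^ (2 * n + 1))
      (arcsin x / √(1 - x ^ 2)) := by
  have hsum : HasSum (fun n : ℕ ↦ ∫ φ in (0 : ℝ)..(π / 2), (x * cos φ) ^ (2 * n + 1))
      (∫ φ in (0 : ℝ)..(π / 2), x * cos φ / (1 - (x * cos φ) ^ 2)) := by
    refine hasSum_intervalIntegral_of_norm_le (u := fun n ↦ ‖x‖ ^ (2 * n + 1))
      (fun n ↦ by fun_prop) (summable_norm_pow_odd hx) (fun n φ _ ↦ ?_)
      (fun φ _ ↦ hasSum_odd_pow_of_norm_lt_one ((norm_mul_cos_le x φ).trans_lt hx))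
    rw [norm_pow]
    exact pow_le_pow_left₀ (norm_nonneg _) (norm_mul_cos_le x φ) _
  rw [integral_mul_cos_div_one_sub_sq hx] at hsum
  convert! hsum using 2 with n
  simp only [mul_pow, integral_const_mul]
  exact mul_comm _ _

theorem abs_le_abs_of_mem_uIcc_zero {x y : ℝ} (hy : y ∈ uIcc 0 x) : |y| ≤ |x| := by
  simpa using abs_sub_left_of_mem_uIcc hy

theorem integral_arcsin_div_sqrt_one_sub_sq {x : ℝ} (hx : |x| < 1) :
    ∫ y in (0 : ℝ)..x, arcsin y / √(1 - y ^ 2) = arcsin x ^ 2 / 2 := by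
  have hlt {y : ℝ} (hy : y ∈ uIcc 0 x) : |y| < 1 := (abs_le_abs_of_mem_uIcc_zero hy).trans_lt hx
  have hderiv : ∀ y ∈ uIcc 0 x,
      HasDerivAt (fun y ↦ arcsin y ^ 2 / 2) (arcsin y / √(1 - y ^ 2)) y := fun y hy ↦ by
    have hy := abs_lt.mp (hlt hy)
    convert! ((hasDerivAt_arcsin hy.1.ne' hy.2.ne).pow 2).div_const 2 using 1
    ring
  have hcont : ContinuousOn (fun y ↦ arcsin y / √(1 - y ^ 2)) (uIcc 0 x) :=
    continuous_arcsin.continuousOn.div (by fun_prop) fun y hy ↦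
      (sqrt_pos.mpr (sub_pos.mpr ((sq_lt_one_iff_abs_lt_one y).mpr (hlt hy)))).ne'
  rw [integral_eq_sub_of_hasDerivAt hderiv hcont.intervalIntegrable]
  simp

theorem hasSum_arcsin_sq_div_two {x : ℝ} (hx : |x| < 1) :
    HasSum (fun n : ℕ ↦ wallisIntegral (2 * n + 1) * (x ^ (2 * n + 2) / (2 * n + 2)))
      (arcsin x ^ 2 / 2) := by
  have hsum : HasSum
      (fun n : ℕ ↦ ∫ y in (0 : ℝ)..x, wallisIntegral (2 * n + 1) * y ^ (2 * n + 1))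
      (∫ y in (0 : ℝ)..x, arcsin y / √(1 - y ^ 2)) := by
    have hyx {y : ℝ} (hy : y ∈ uIoc 0 x) : ‖y‖ ≤ ‖x‖ :=
      abs_le_abs_of_mem_uIcc_zero (uIoc_subset_uIcc hy)
    refine hasSum_intervalIntegral_of_norm_le (u := fun n ↦ π / 2 * ‖x‖ ^ (2 * n + 1))
      (fun n ↦ by fun_prop) ((summable_norm_pow_odd hx).mul_left _) (fun n y hy ↦ ?_)
      (fun y hy ↦ hasSum_arcsin_div_sqrt_one_sub_sq ((hyx hy).trans_lt hx))
    rw [norm_mul, norm_pow]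
    gcongr
    · exact norm_wallisIntegral_le _
    · exact hyx hy
  rw [integral_arcsin_div_sqrt_one_sub_sq hx] at hsum
  convert! hsum using 2 with n
  rw [integral_const_mul, integral_pow]
  push_cast
  ring_nf

theorem integral_wallisIntegral_mul_cos_pow (r : ℝ) (n : ℕ) :
    ∫ θ in (0 : ℝ)..(π / 2),
        wallisIntegral (2 * n + 1) * ((r * cos θ) ^ (2 * n + 2) / (2 * n + 2)) =
      π / 8 * ((r ^ 2) ^ (n + 1) / ((n : ℝ) + 1) ^ 2) := by
  have hwallis := succ_mul_wallisIntegral_mul_wallisIntegral_succ (2 * n + 1)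
  push_cast at hwallis
  simp only [mul_pow, integral_const_mul, integral_div]
  rw [← wallisIntegral, show π / 8 = π / 2 / 4 by ring, ← hwallis, ← pow_mul]
  field_simp
  ring

theorem integral_arcsin_mul_cos_sq {r : ℝ} (hr : |r| < 1) :
    ∫ θ in (0 : ℝ)..(π / 2), arcsin (r * cos θ) ^ 2 = π / 4 * dilog (r ^ 2) := by
  have hsum : HasSum
      (fun n : ℕ ↦ ∫ θ in (0 : ℝ)..(π / 2),
        wallisIntegral (2 * n + 1) * ((r * cos θ) ^ (2 * n + 2) / (2 * n + 2)))
      (∫ θ in (0 : ℝ)..(π / 2), arcsin (r * cos θ) ^ 2 / 2) := by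
    refine hasSum_intervalIntegral_of_norm_le (u := fun n ↦ π / 2 * (‖r‖ ^ (2 * n + 1) * ‖r‖))
      (fun n ↦ by fun_prop) (((summable_norm_pow_odd hr).mul_right _).mul_left _)
      (fun n θ _ ↦ ?_)
      (fun θ _ ↦ hasSum_arcsin_sq_div_two ((norm_mul_cos_le r θ).trans_lt hr))
    have hden : (1 : ℝ) ≤ ‖(2 * n + 2 : ℝ)‖ := by
      rw [norm_of_nonneg (by positivity)]
      linarith [n.cast_nonneg (α := ℝ)]
    rw [norm_mul, norm_div, norm_pow, ← pow_succ]
    exact mul_le_mul (norm_wallisIntegral_le _) ((div_le_self (by positivity) hden).trans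
      (pow_le_pow_left₀ (norm_nonneg _) (norm_mul_cos_le r θ) _)) (by positivity) (by positivity)
  simp only [integral_wallisIntegral_mul_cos_pow, integral_div] at hsum
  have htsum := hsum.tsum_eq
  rw [tsum_mul_left, ← dilog] at htsum
  linarith

end ArcsinSquared

section Angle

open Real

/-- The polar angle of the point `(1 - t², √2 t)`, which is a primitive of `F₃ / (2i)`. The sum of
two arctangents is a form without a jump where the point crosses the vertical axis at `t = 1`. -/
def quarticAngle (t : ℝ) : ℝ := arctan (√2 * t + 1) + arctan (√2 * t - 1)

theorem one_add_sqrt_two_mul_add_one_sq_mul (t : ℝ) :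
    (1 + (√2 * t + 1) ^ 2) * (1 + (√2 * t - 1) ^ 2) = 2 ^ 2 * (1 + t ^ 4) := by
  linear_combination t ^ 4 * (√2 ^ 2 + 2) * sq_sqrt (zero_le_two (α := ℝ))

theorem hasDerivAt_quarticAngle (t : ℝ) :
    HasDerivAt quarticAngle (√2 * (1 + t ^ 2) / (1 + t ^ 4)) t := by
  have hlin : HasDerivAt (fun t ↦ √2 * t) √2 t := by simpa using (hasDerivAt_id t).const_mul √2
  convert! ((hlin.add_const 1).arctan).add ((hlin.sub_const 1).arctan) using 1
  have hprod := one_add_sqrt_two_mul_add_one_sq_mul t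
  have hsq : √2 ^ 2 = 2 := sq_sqrt zero_le_two
  rw [← add_mul, div_add_div _ _ (by positivity) (by positivity), hprod]
  field_simp
  linear_combination (-2 * t ^ 2) * hsq

theorem quarticAngle_zero : quarticAngle 0 = 0 := by simp [quarticAngle]

theorem quarticAngle_one : quarticAngle 1 = π / 2 := by
  have hinv : √2 - 1 = (√2 + 1)⁻¹ :=
    eq_inv_of_mul_eq_one_left (by linarith [mul_self_sqrt (zero_le_two (α := ℝ))])
  rw [quarticAngle, mul_one, hinv, arctan_inv_of_pos (by positivity)]
  ring

theorem cos_quarticAngle (t : ℝ) : cos (quarticAngle t) = (1 - t ^ 2) / √(1 + t ^ 4) := by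
  have hsqrt : √(1 + (√2 * t + 1) ^ 2) * √(1 + (√2 * t - 1) ^ 2) = 2 * √(1 + t ^ 4) := by
    rw [← sqrt_mul (by positivity), one_add_sqrt_two_mul_add_one_sq_mul, sqrt_mul (by positivity),
      sqrt_sq zero_le_two]
  rw [quarticAngle, cos_add, cos_arctan, cos_arctan, sin_arctan, sin_arctan, div_mul_div_comm,
    div_mul_div_comm, hsqrt, ← sub_div, div_eq_div_iff (by positivity) (by positivity)]
  linear_combination (-t ^ 2 * √(1 + t ^ 4)) * sq_sqrt (zero_le_two (α := ℝ))

theorem sin_pi_div_four_sub_arctan_sq (t : ℝ) :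
    sin (π / 4 - arctan (t ^ 2)) = (√2)⁻¹ * cos (quarticAngle t) := by
  rw [cos_quarticAngle, sin_sub, sin_pi_div_four, cos_pi_div_four, cos_arctan, sin_arctan,
    ← pow_mul, sqrt_div_self']
  ring

theorem arcsin_cos_quarticAngle (t : ℝ) :
    arcsin ((√2)⁻¹ * cos (quarticAngle t)) = π / 4 - arctan (t ^ 2) := by
  have hnonneg : 0 ≤ arctan (t ^ 2) := arctan_nonneg.mpr (sq_nonneg t)
  have hlt : arctan (t ^ 2) < π / 2 := arctan_lt_pi_div_two _
  rw [← sin_pi_div_four_sub_arctan_sq, arcsin_sin] <;> linarith [pi_pos]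

theorem continuous_deriv_quarticAngle :
    Continuous fun t : ℝ ↦ √2 * (1 + t ^ 2) / (1 + t ^ 4) :=
  .div (by fun_prop) (by fun_prop) fun t ↦ by positivity

theorem integral_sq_mul_deriv_quarticAngle :
    ∫ t in (0 : ℝ)..1, (π / 4 - arctan (t ^ 2)) ^ 2 * (√2 * (1 + t ^ 2) / (1 + t ^ 4)) =
      π / 4 * (π ^ 2 / 12 - log 2 ^ 2 / 2) := by
  have hlt : |(√2)⁻¹| < 1 := by
    rw [abs_of_pos (by positivity)]
    exact inv_lt_one_of_one_lt₀ one_lt_sqrt_two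
  have hsq : (√2)⁻¹ ^ 2 = 1 / 2 := by rw [inv_pow, sq_sqrt zero_le_two, one_div]
  have hcont : Continuous fun θ ↦ arcsin ((√2)⁻¹ * cos θ) ^ 2 :=
    (continuous_arcsin.comp (by fun_prop)).pow 2
  have hsubst := intervalIntegral.integral_comp_mul_deriv (a := 0) (b := 1)
    (fun t _ ↦ hasDerivAt_quarticAngle t) continuous_deriv_quarticAngle.continuousOn hcont
  simp only [Function.comp_apply, arcsin_cos_quarticAngle, quarticAngle_zero,
    quarticAngle_one] at hsubst
  rw [hsubst, integral_arcsin_mul_cos_sq hlt, hsq, dilog_one_half]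

end Angle

section Forms

open Complex

theorem one_div_sub_add_one_div_add {K : Type*} [Field K] {z p : K} (h : z ^ 2 - p ^ 2 ≠ 0) :
    1 / (z - p) + 1 / (z + p) = 2 * z / (z ^ 2 - p ^ 2) := by
  rw [sq_sub_sq] at h ⊢
  have := left_ne_zero_of_mul h
  have := right_ne_zero_of_mul h
  field_simp
  ring

theorem one_div_sub_sub_one_div_add {K : Type*} [Field K] {z p : K} (h : z ^ 2 - p ^ 2 ≠ 0) :
    1 / (z - p) - 1 / (z + p) = 2 * p / (z ^ 2 - p ^ 2) := by
  rw [sq_sub_sq] at h ⊢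
  have := left_ne_zero_of_mul h
  have := right_ne_zero_of_mul h
  field_simp
  ring

theorem p₁_eq : p₁ = √2 / 2 * (1 + I) := by
  rw [p₁, mul_comm, exp_mul_I, ← ofReal_ofNat, ← ofReal_div, ← ofReal_cos, ← ofReal_sin,
    Real.cos_pi_div_four, Real.sin_pi_div_four]
  push_cast
  ring

theorem p₂_eq : p₂ = √2 / 2 * (-1 + I) := by
  rw [p₂, mul_comm, ← neg_mul, exp_mul_I, cos_neg, sin_neg, ← ofReal_ofNat, ← ofReal_div,
    ← ofReal_cos, ← ofReal_sin, Real.cos_pi_div_four, Real.sin_pi_div_four]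
  push_cast
  ring

theorem ofReal_sqrt_two_sq : (√2 : ℂ) ^ 2 = 2 := by
  exact_mod_cast Real.sq_sqrt zero_le_two

theorem p₁_sq : p₁ ^ 2 = I := by
  rw [p₁_eq]
  linear_combination (I / 2) * ofReal_sqrt_two_sq + (√2 : ℂ) ^ 2 / 4 * I_sq

theorem p₂_sq : p₂ ^ 2 = -I := by
  rw [p₂_eq]
  linear_combination (-I / 2) * ofReal_sqrt_two_sq + (√2 : ℂ) ^ 2 / 4 * I_sq

theorem ofReal_sq_sub_p₁_sq_ne_zero (t : ℝ) : (t : ℂ) ^ 2 - p₁ ^ 2 ≠ 0 := fun h ↦ by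
  simpa [p₁_sq, ← ofReal_pow] using congrArg im h

theorem ofReal_sq_sub_p₂_sq_ne_zero (t : ℝ) : (t : ℂ) ^ 2 - p₂ ^ 2 ≠ 0 := fun h ↦ by
  simpa [p₂_sq, ← ofReal_pow] using congrArg im h

theorem ofReal_sq_sub_p₁_sq_mul_ofReal_sq_sub_p₂_sq (t : ℝ) :
    ((t : ℂ) ^ 2 - p₁ ^ 2) * ((t : ℂ) ^ 2 - p₂ ^ 2) = 1 + (t : ℂ) ^ 4 := by
  rw [p₁_sq, p₂_sq]
  linear_combination -I_sq

theorem F₁_ofReal (t : ℝ) : F₁ t = 2 * I * (2 * t / (1 + t ^ 4) : ℝ) := by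
  calc F₁ t = (1 / (t - p₁) + 1 / (t + p₁)) - (1 / (t - p₂) + 1 / (t + p₂)) := by
        rw [F₁, p₃, p₄, sub_neg_eq_add, sub_neg_eq_add]
        ring
    _ = (2 * t * (t ^ 2 - p₂ ^ 2) - (t ^ 2 - p₁ ^ 2) * (2 * t)) / (1 + t ^ 4) := by
        rw [one_div_sub_add_one_div_add (ofReal_sq_sub_p₁_sq_ne_zero t),
          one_div_sub_add_one_div_add (ofReal_sq_sub_p₂_sq_ne_zero t),
          div_sub_div _ _ (ofReal_sq_sub_p₁_sq_ne_zero t) (ofReal_sq_sub_p₂_sq_ne_zero t),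
          ofReal_sq_sub_p₁_sq_mul_ofReal_sq_sub_p₂_sq]
    _ = 2 * I * (2 * t / (1 + t ^ 4) : ℝ) := by
        rw [p₁_sq, p₂_sq]
        push_cast
        ring

theorem F₃_ofReal (t : ℝ) : F₃ t = 2 * I * (√2 * (1 + t ^ 2) / (1 + t ^ 4) : ℝ) := by
  calc F₃ t = (1 / (t - p₁) - 1 / (t + p₁)) + (1 / (t - p₂) - 1 / (t + p₂)) := by
        rw [F₃, p₃, p₄, sub_neg_eq_add, sub_neg_eq_add]
        ring
    _ = (2 * p₁ * (t ^ 2 - p₂ ^ 2) + (t ^ 2 - p₁ ^ 2) * (2 * p₂)) / (1 + t ^ 4) := by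
        rw [one_div_sub_sub_one_div_add (ofReal_sq_sub_p₁_sq_ne_zero t),
          one_div_sub_sub_one_div_add (ofReal_sq_sub_p₂_sq_ne_zero t),
          div_add_div _ _ (ofReal_sq_sub_p₁_sq_ne_zero t) (ofReal_sq_sub_p₂_sq_ne_zero t),
          ofReal_sq_sub_p₁_sq_mul_ofReal_sq_sub_p₂_sq]
    _ = 2 * I * (√2 * (1 + t ^ 2) / (1 + t ^ 4) : ℝ) := by
        rw [p₁_sq, p₂_sq, p₁_eq, p₂_eq]
        push_cast
        ring

theorem continuous_F₁_ofReal : Continuous fun t : ℝ ↦ F₁ t := by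
  simp only [F₁_ofReal]
  exact continuous_const.mul (continuous_ofReal.comp
    (.div (by fun_prop) (by fun_prop) fun t ↦ by positivity))

theorem continuous_F₃_ofReal : Continuous fun t : ℝ ↦ F₃ t := by
  simp only [F₃_ofReal]
  exact continuous_const.mul (continuous_ofReal.comp continuous_deriv_quarticAngle)

theorem hasDerivAt_two_I_mul_arctan_sq (t : ℝ) :
    HasDerivAt (fun t : ℝ ↦ 2 * I * (Real.arctan (t ^ 2) : ℂ)) (F₁ t) t := by
  rw [F₁_ofReal]
  refine (HasDerivAt.ofReal_comp ?_).const_mul _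
  convert! (hasDerivAt_pow 2 t).arctan using 1
  simp only [Nat.cast_ofNat, Nat.add_one_sub_one, pow_one]
  ring

theorem Omega_F₃_F₁_F₁_one :
    Omega [F₃, F₁, F₁] 1 = -4 * I *
      (∫ t in (0 : ℝ)..1, (Real.pi / 4 - Real.arctan (t ^ 2)) ^ 2 *
        (√2 * (1 + t ^ 2) / (1 + t ^ 4)) : ℝ) := by
  rw [← intervalIntegral.integral_ofReal, ← intervalIntegral.integral_const_mul]
  refine (Omega_cons_replicate continuous_F₃_ofReal continuous_F₁_ofReal
    hasDerivAt_two_I_mul_arctan_sq 2 1).trans (intervalIntegral.integral_congr fun t _ ↦ ?_)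
  simp only [F₃_ofReal, one_pow, Real.arctan_one, Nat.factorial_two, ofReal_mul, ofReal_pow,
    ofReal_sub]
  linear_combination 4 * I * ((Real.pi / 4 : ℝ) - Real.arctan (t ^ 2) : ℂ) ^ 2 *
    (√2 * (1 + t ^ 2) / (1 + t ^ 4) : ℝ) * I_sq

end Forms

/- STATEMENT 12: `Ω_{3,1,1} = (iπ/2)(log 2)² - iπ³/12`. -/
theorem stmt_12 :
    Omega [F₃, F₁, F₁] 1 =
      Complex.I * (Real.pi : ℂ) / 2 * ((Real.log 2 : ℝ) : ℂ) ^ 2 -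
        Complex.I * (Real.pi : ℂ) ^ 3 / 12 := by
  rw [Omega_F₃_F₁_F₁_one, integral_sq_mul_deriv_quarticAngle]
  push_cast
  ring
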